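/- For all d ∈ ℕ and ε ∈ (0,1), the inverse of the BMO-discrepancy satisfies N_BMO(ε,d) ≥ (4/3)^d (1−ε²). Consequently, the BMO-discrepancy suffers from the curse of dimensionality: N_BMO(ε,d) grows at least exponentially in d for fixed ε < 1. -/

import Mathlib

open MeasureTheory Set
open scoped Classical

/-- The one-dimensional dyadic Haar function `h_{j,m}`: `+1` on the left half
of the dyadic interval `I_{j,m} = [m/2^j, (m+1)/2^j)`, `-1` on the right half,
`0` elsewhere. -/
noncomputable def haar1 (j m : ℕ) (x : ℝ) : ℝ :=
  if x ∈ Set.Ico ((m : ℝ) / 2 ^ j) (((m : ℝ) + 1 / 2) / 2 ^ j) then 1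
  else if x ∈ Set.Ico (((m : ℝ) + 1 / 2) / 2 ^ j) (((m : ℝ) + 1) / 2 ^ j) then -1
  else 0

/-- The dyadic interval `I_{j,m} = [m/2^j, (m+1)/2^j)`. -/
def dyadicI (j m : ℕ) : Set ℝ := Set.Ico ((m : ℝ) / 2 ^ j) (((m : ℝ) + 1) / 2 ^ j)

/-- The unit cube `[0,1)^d`. -/
def unitBox (d : ℕ) : Set (Fin d → ℝ) := Set.univ.pi fun _ => Set.Ico (0 : ℝ) 1

/-- The tensor product Haar function `h_{j,m}` on `[0,1)^d`. -/
noncomputable def haarD {d : ℕ} (j m : Fin d → ℕ) (x : Fin d → ℝ) : ℝ :=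
  ∏ i, haar1 (j i) (m i) (x i)

/-- The dyadic box `I_{j,m} ⊆ [0,1)^d`. -/
def dyadicBox {d : ℕ} (j m : Fin d → ℕ) : Set (Fin d → ℝ) :=
  Set.univ.pi fun i => dyadicI (j i) (m i)

/-- The Haar coefficient `⟨f, h_{j,m}⟩ = ∫_{[0,1)^d} f·h_{j,m}`. -/
noncomputable def haarCoef {d : ℕ} (f : (Fin d → ℝ) → ℝ) (j m : Fin d → ℕ) : ℝ :=
  ∫ x in unitBox d, f x * haarD j m x

/-- The anchored local discrepancy `Δ_P([0,t))` of the point set `P`. -/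
noncomputable def discAnch {d N : ℕ} (P : Fin N → Fin d → ℝ) (t : Fin d → ℝ) : ℝ :=
  ((Finset.univ.filter fun i => ∀ k, 0 ≤ P i k ∧ P i k < t k).card : ℝ) / N
    - ∏ k, t k

/-- The local discrepancy `Δ_P([a,b))` of the point set `P` on the box `[a,b)`. -/
noncomputable def discBoxFn {d N : ℕ} (P : Fin N → Fin d → ℝ) (a b : Fin d → ℝ) : ℝ :=
  ((Finset.univ.filter fun i => ∀ k, a k ≤ P i k ∧ P i k < b k).card : ℝ) / N
    - ∏ k, (b k - a k)

/-- Squared extreme (unanchored) `L₂`-discrepancy. -/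
noncomputable def L2extrSq {d N : ℕ} (P : Fin N → Fin d → ℝ) : ℝ :=
  ∫ x in unitBox d, ∫ y in unitBox d,
    (if x ≤ y then (discBoxFn P x y) ^ 2 else 0)

/-- The squared (product dyadic) BMO seminorm of `f`, via Haar coefficients. -/
noncomputable def bmoSq {d : ℕ} (f : (Fin d → ℝ) → ℝ) : ℝ :=
  ⨆ U : {U : Set (Fin d → ℝ) // MeasurableSet U ∧ U ⊆ unitBox d ∧ 0 < volume U},
    (volume U.1).toReal⁻¹ *
      ∑' j : Fin d → ℕ, (2 : ℝ) ^ (∑ i, j i) *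
        ∑ m ∈ Fintype.piFinset (fun i => Finset.range (2 ^ j i)),
          (if dyadicBox j m ⊆ U.1 then (haarCoef f j m) ^ 2 else 0)

/-- The `N`-th minimal BMO-discrepancy in dimension `d`. -/
noncomputable def discBMO (d N : ℕ) : ℝ :=
  ⨅ P : {P : Fin N → Fin d → ℝ // ∀ i, P i ∈ unitBox d},
    Real.sqrt (bmoSq (discAnch P.1))

/-- The `N`-th minimal extreme `L₂`-discrepancy in dimension `d`. -/
noncomputable def discL2extr (d N : ℕ) : ℝ :=
  ⨅ P : {P : Fin N → Fin d → ℝ // ∀ i, P i ∈ unitBox d},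
    Real.sqrt (L2extrSq P.1)

/-- Inverse of the BMO-discrepancy; the initial BMO-discrepancy is `12^{-d/2}`. -/
noncomputable def NinvBMO (d : ℕ) (ε : ℝ) : ℕ :=
  sInf {N : ℕ | discBMO d N ≤ ε * Real.sqrt ((1 / 12) ^ d)}

/-- Inverse of the extreme `L₂`-discrepancy; its initial value is `12^{-d/2}`. -/
noncomputable def NinvL2extr (d : ℕ) (ε : ℝ) : ℕ :=
  sInf {N : ℕ | discL2extr d N ≤ ε * Real.sqrt ((1 / 12) ^ d)}

/-!
The supremum defining the BMO seminorm is tested on the whole cube `U = [0,1)^d`. The Haar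
coefficient of the discrepancy function at `(j, m)` is, up to sign, the average over the points of
a product of tent functions minus the constant `∏ 4^{-(j_k+1)}`. Tents are nonnegative, so in the
square of the sum over the points the products of distinct points may be dropped; what remains
factorizes over the coordinates. In one variable the three sums over all `(j, m)` are
`∑ 4^{-j}/16 = 1/12` and the Takagi-type series `p(1-p)/2` and `p(1-p)`, both telescoping through
`fract (2^j p) (1 - fract (2^j p))`. Completing the square in the normalization `1/N` and using
`p(1-p) ≤ 1/4`, one point lowers the squared seminorm from `12^{-d}` by at most `16^{-d}`.

In Lean an unbounded supremum and the infimum of an empty set of naturals are both `0`. Bessel's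
inequality bounds the supremum by the squared sup norm of the discrepancy function, and regular
grids, whose discrepancy function is at most `d/n`, provide an admissible `N`.
-/

open Filter Topology

/-- The distance from a real number to the nearest integer. -/
noncomputable def distToInt (x : ℝ) : ℝ := |x - round x|

lemma distToInt_eq_min (x : ℝ) : distToInt x = min (Int.fract x) (1 - Int.fract x) :=
  abs_sub_round_eq_min x

lemma distToInt_mem_Icc (x : ℝ) : distToInt x ∈ Icc (0 : ℝ) (1 / 2) :=
  ⟨abs_nonneg _, abs_sub_round x⟩

lemma distToInt_mul_one_sub_distToInt (x : ℝ) :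
    distToInt x * (1 - distToInt x) = Int.fract x * (1 - Int.fract x) := by
  rw [distToInt_eq_min]
  rcases min_choice (Int.fract x) (1 - Int.fract x) with h | h <;> rw [h]
  ring

lemma distToInt_two_mul (x : ℝ) :
    distToInt (2 * x) = min (2 * distToInt x) (1 - 2 * distToInt x) := by
  have h0 := Int.fract_nonneg x
  have h1 := Int.fract_lt_one x
  rw [distToInt_eq_min, distToInt_eq_min]
  rcases lt_or_ge (Int.fract x) (1 / 2) with h | h
  · have hfract : Int.fract (2 * x) = 2 * Int.fract x :=
      Int.fract_eq_iff.mpr ⟨by linarith, by linarith, 2 * ⌊x⌋, by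
        push_cast; linarith [Int.floor_add_fract x]⟩
    rw [hfract, min_eq_left (a := Int.fract x) (by linarith)]
  · have hfract : Int.fract (2 * x) = 2 * Int.fract x - 1 :=
      Int.fract_eq_iff.mpr ⟨by linarith, by linarith, 2 * ⌊x⌋ + 1, by
        push_cast; linarith [Int.floor_add_fract x]⟩
    rw [hfract, min_eq_right (a := Int.fract x) (by linarith), min_comm]
    congr 1 <;> ring

lemma fract_two_mul_mul_one_sub (x : ℝ) :
    Int.fract (2 * x) * (1 - Int.fract (2 * x)) = 2 * distToInt x * (1 - 2 * distToInt x) := by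
  rw [← distToInt_mul_one_sub_distToInt, distToInt_two_mul]
  rcases min_choice (2 * distToInt x) (1 - 2 * distToInt x) with h | h <;> rw [h]
  ring

lemma hasSum_of_eq_sub_succ {a g : ℕ → ℝ} (ha : ∀ j, 0 ≤ a j) (h : ∀ j, a j = g j - g (j + 1))
    (hg : Tendsto g atTop (𝓝 0)) : HasSum a (g 0) := by
  rw [hasSum_iff_tendsto_nat_of_nonneg ha]
  simp_rw [h, Finset.sum_range_sub']
  simpa using hg.const_sub (g 0)

lemma tendsto_pow_mul_fract_mul_one_sub {c : ℝ} (hc : c ∈ Ico (0 : ℝ) 1) (y : ℕ → ℝ) :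
    Tendsto (fun j => c ^ j * (Int.fract (y j) * (1 - Int.fract (y j)))) atTop (𝓝 0) := by
  have h0 j := Int.fract_nonneg (y j)
  have h1 j := (Int.fract_lt_one (y j)).le
  have hc' j := pow_nonneg hc.1 j
  refine squeeze_zero (fun j => mul_nonneg (hc' j) (mul_nonneg (h0 j) (sub_nonneg.mpr (h1 j))))
    (fun j => mul_le_of_le_one_right (hc' j) ?_)
    (tendsto_pow_atTop_nhds_zero_of_lt_one hc.1 hc.2)
  exact mul_le_one₀ (h1 j) (sub_nonneg.mpr (h1 j)) (sub_le_self 1 (h0 j))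

lemma hasSum_distToInt_sq (x : ℝ) :
    HasSum (fun j : ℕ => (1 / 2 : ℝ) ^ j * distToInt (2 ^ j * x) ^ 2)
      (Int.fract x * (1 - Int.fract x)) := by
  have hlim := tendsto_pow_mul_fract_mul_one_sub (c := 1 / 2) (by norm_num) fun j => 2 ^ j * x
  have hsum := hasSum_of_eq_sub_succ (a := fun j => (1 / 2 : ℝ) ^ j * distToInt (2 ^ j * x) ^ 2)
    (fun j => by positivity) (fun j => ?_) hlim
  · simpa only [pow_zero, one_mul] using hsum
  · rw [pow_succ' 2, mul_assoc 2, fract_two_mul_mul_one_sub, ← distToInt_mul_one_sub_distToInt]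
    ring

lemma hasSum_distToInt (x : ℝ) :
    HasSum (fun j : ℕ => (1 / 4 : ℝ) ^ j * distToInt (2 ^ j * x))
      (2 * (Int.fract x * (1 - Int.fract x))) := by
  have hlim := (tendsto_pow_mul_fract_mul_one_sub (c := 1 / 4) (by norm_num)
    fun j => 2 ^ j * x).const_mul 2
  rw [mul_zero] at hlim
  have hsum := hasSum_of_eq_sub_succ (a := fun j => (1 / 4 : ℝ) ^ j * distToInt (2 ^ j * x))
    (fun j => mul_nonneg (by positivity) (distToInt_mem_Icc _).1) (fun j => ?_) hlim
  · simpa only [pow_zero, one_mul] using hsum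
  · rw [pow_succ' 2, mul_assoc 2, fract_two_mul_mul_one_sub, ← distToInt_mul_one_sub_distToInt]
    ring

section OneDimensional

variable {j m : ℕ} {p x : ℝ}

lemma mem_dyadicI_iff (hx : 0 ≤ x) : x ∈ dyadicI j m ↔ ⌊2 ^ j * x⌋₊ = m := by
  have h2 : (0 : ℝ) < 2 ^ j := by positivity
  rw [Nat.floor_eq_iff (by positivity), dyadicI, mem_Ico, div_le_iff₀ h2, lt_div_iff₀ h2,
    mul_comm x]

lemma nonneg_of_mem_dyadicI (hx : x ∈ dyadicI j m) : 0 ≤ x :=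
  le_trans (by positivity) hx.1

lemma measurableSet_dyadicI (j m : ℕ) : MeasurableSet (dyadicI j m) := measurableSet_Ico

lemma dyadicI_le (j m : ℕ) : (m : ℝ) / 2 ^ j ≤ (m + 1) / 2 ^ j := by
  gcongr
  linarith

lemma dyadicI_subset_Ico (hm : m < 2 ^ j) : dyadicI j m ⊆ Ico 0 1 :=
  Ico_subset_Ico (by positivity) <| (div_le_one (by positivity)).mpr (by exact_mod_cast hm)

lemma volume_real_dyadicI (j m : ℕ) : volume.real (dyadicI j m) = (2 ^ j)⁻¹ := by
  rw [dyadicI, Real.volume_real_Ico_of_le (dyadicI_le j m)]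
  ring

lemma mem_dyadicI_iff_of_mem {r n : ℕ} (hx : x ∈ dyadicI (j + r) n) :
    x ∈ dyadicI j m ↔ n / 2 ^ r = m := by
  have hx0 := nonneg_of_mem_dyadicI hx
  rw [mem_dyadicI_iff hx0] at hx ⊢
  rw [← hx, ← Nat.floor_div_natCast, Nat.cast_pow, Nat.cast_ofNat, pow_add, mul_right_comm,
    mul_div_cancel_right₀ _ (by positivity)]

lemma mem_dyadicI_iff_mem_children :
    x ∈ dyadicI j m ↔ x ∈ dyadicI (j + 1) (2 * m) ∨ x ∈ dyadicI (j + 1) (2 * m + 1) := by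
  have hsplit : dyadicI (j + 1) (2 * m) ∪ dyadicI (j + 1) (2 * m + 1) = dyadicI j m := by
    have h := dyadicI_le (j + 1) (2 * m)
    have h' := dyadicI_le (j + 1) (2 * m + 1)
    simp only [dyadicI]
    push_cast at h h' ⊢
    rw [Ico_union_Ico_eq_Ico h h', pow_succ]
    congr 1 <;> field_simp
    ring
  rw [← hsplit, mem_union]

lemma haar1_eq_ite (j m : ℕ) (x : ℝ) : haar1 j m x =
    if x ∈ dyadicI (j + 1) (2 * m) then 1
    else if x ∈ dyadicI (j + 1) (2 * m + 1) then -1 else 0 := by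
  have hl : (m : ℝ) / 2 ^ j = 2 * m / 2 ^ (j + 1) := by rw [pow_succ]; field_simp
  have hc : ((m : ℝ) + 1 / 2) / 2 ^ j = (2 * m + 1) / 2 ^ (j + 1) := by rw [pow_succ]; field_simp
  have hr : ((m : ℝ) + 1) / 2 ^ j = (2 * m + 1 + 1) / 2 ^ (j + 1) := by
    rw [pow_succ]; field_simp; ring
  rw [haar1, hl, hc, hr]
  simp only [dyadicI, Nat.cast_add, Nat.cast_mul, Nat.cast_ofNat, Nat.cast_one]

lemma haar1_eq_indicator_sub (j m : ℕ) (x : ℝ) : haar1 j m x =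
    (dyadicI (j + 1) (2 * m)).indicator 1 x - (dyadicI (j + 1) (2 * m + 1)).indicator 1 x := by
  have hdisj : x ∈ dyadicI (j + 1) (2 * m) → x ∉ dyadicI (j + 1) (2 * m + 1) := fun h h' => by
    have hx := nonneg_of_mem_dyadicI h
    rw [mem_dyadicI_iff hx] at h h'
    omega
  rw [haar1_eq_ite]
  simp only [indicator_apply, Pi.one_apply]
  split_ifs <;> simp_all

lemma measurable_haar1 (j m : ℕ) : Measurable (haar1 j m) := by
  rw [funext (haar1_eq_indicator_sub j m)]
  exact (measurable_one.indicator (measurableSet_dyadicI _ _)).sub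
    (measurable_one.indicator (measurableSet_dyadicI _ _))

lemma abs_haar1_le_one (j m : ℕ) (x : ℝ) : |haar1 j m x| ≤ 1 := by
  rw [haar1]
  split_ifs <;> simp

lemma haar1_mul_self (j m : ℕ) (x : ℝ) :
    haar1 j m x * haar1 j m x = (dyadicI j m).indicator 1 x := by
  rw [haar1_eq_ite, indicator_apply, mem_dyadicI_iff_mem_children (j := j)]
  split_ifs <;> simp_all

lemma haar1_eq_zero_of_notMem (hx : x ∉ dyadicI j m) : haar1 j m x = 0 := by
  rw [← mul_self_eq_zero, haar1_mul_self, indicator_of_notMem hx]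

lemma integrableOn_mul_haar1 {φ : ℝ → ℝ} {s : Set ℝ} (hφ : IntegrableOn φ s) (j m : ℕ) :
    IntegrableOn (fun t => φ t * haar1 j m t) s :=
  hφ.mul_bdd (measurable_haar1 j m).aestronglyMeasurable (ae_of_all _ (abs_haar1_le_one j m))

lemma setIntegral_mul_haar1 (hm : m < 2 ^ j) {φ : ℝ → ℝ} (hφ : IntegrableOn φ (Ico 0 1)) :
    ∫ t in Ico (0 : ℝ) 1, φ t * haar1 j m t =
      (∫ t in dyadicI (j + 1) (2 * m), φ t) - ∫ t in dyadicI (j + 1) (2 * m + 1), φ t := by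
  have hsub {n : ℕ} (hn : n < 2 ^ (j + 1)) :
      ∫ t in Ico (0 : ℝ) 1, (dyadicI (j + 1) n).indicator φ t = ∫ t in dyadicI (j + 1) n, φ t := by
    rw [setIntegral_indicator (measurableSet_dyadicI _ _),
      inter_eq_right.mpr (dyadicI_subset_Ico hn)]
  have hsplit (t : ℝ) : φ t * haar1 j m t = (dyadicI (j + 1) (2 * m)).indicator φ t -
      (dyadicI (j + 1) (2 * m + 1)).indicator φ t := by
    simp only [haar1_eq_indicator_sub, mul_sub, indicator_apply, Pi.one_apply, mul_ite, mul_one,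
      mul_zero]
  rw [integral_congr_ae (ae_of_all _ hsplit),
    integral_sub (hφ.integrable.indicator (measurableSet_dyadicI _ _))
      (hφ.integrable.indicator (measurableSet_dyadicI _ _)),
    hsub (by rw [pow_succ]; omega), hsub (by rw [pow_succ]; omega)]

lemma setIntegral_haar1 (hm : m < 2 ^ j) : ∫ t in Ico (0 : ℝ) 1, haar1 j m t = 0 := by
  simpa [volume_real_dyadicI] using setIntegral_mul_haar1 hm (φ := 1) (integrable_const 1)

lemma setIntegral_haar1_mul_self (hm : m < 2 ^ j) :
    ∫ t in Ico (0 : ℝ) 1, haar1 j m t * haar1 j m t = (2 ^ j)⁻¹ := by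
  simp_rw [haar1_mul_self]
  rw [setIntegral_indicator (measurableSet_dyadicI _ _),
    inter_eq_right.mpr (dyadicI_subset_Ico hm)]
  simp [volume_real_dyadicI]

lemma setIntegral_haar1_mul_haar1_of_lt {j' m' : ℕ} (hm' : m' < 2 ^ j') (hj : j < j') :
    ∫ t in Ico (0 : ℝ) 1, haar1 j m t * haar1 j' m' t = 0 := by
  obtain ⟨r, rfl⟩ := Nat.exists_eq_add_of_le (Nat.succ_le_of_lt hj)
  set c : ℝ := if m' / 2 ^ r = 2 * m then 1 else if m' / 2 ^ r = 2 * m + 1 then -1 else 0 with hc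
  have hconst (t : ℝ) : haar1 j m t * haar1 (j + 1 + r) m' t = c * haar1 (j + 1 + r) m' t := by
    by_cases ht : t ∈ dyadicI (j + 1 + r) m'
    · rw [haar1_eq_ite j, hc]
      simp only [mem_dyadicI_iff_of_mem ht]
    · rw [haar1_eq_zero_of_notMem ht, mul_zero, mul_zero]
  simp_rw [Nat.succ_eq_add_one, hconst]
  rw [integral_const_mul, setIntegral_haar1 hm', mul_zero]

lemma setIntegral_haar1_mul_haar1_of_ne {j' m' : ℕ} (hm : m < 2 ^ j) (hm' : m' < 2 ^ j')
    (hne : (j, m) ≠ (j', m')) : ∫ t in Ico (0 : ℝ) 1, haar1 j m t * haar1 j' m' t = 0 := by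
  rcases lt_trichotomy j j' with hj | rfl | hj
  · exact setIntegral_haar1_mul_haar1_of_lt hm' hj
  · have hzero (t : ℝ) : haar1 j m t * haar1 j m' t = 0 := by
      by_contra h
      have ht := of_not_not (mt haar1_eq_zero_of_notMem (left_ne_zero_of_mul h))
      have ht' := of_not_not (mt haar1_eq_zero_of_notMem (right_ne_zero_of_mul h))
      have ht0 := nonneg_of_mem_dyadicI ht
      rw [mem_dyadicI_iff ht0] at ht ht'
      exact hne (by rw [← ht, ← ht'])
    simp [hzero]
  · simp_rw [mul_comm (haar1 j m _)]
    exact setIntegral_haar1_mul_haar1_of_lt hm hj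

lemma setIntegral_id_dyadicI (j m : ℕ) : ∫ t in dyadicI j m, t = (m + 1 / 2) / 4 ^ j := by
  rw [dyadicI, integral_Ico_eq_integral_Ioc, ← intervalIntegral.integral_of_le (dyadicI_le j m),
    integral_id, show (4 : ℝ) = 2 * 2 by norm_num, mul_pow]
  field_simp
  ring

lemma setIntegral_id_mul_haar1 (hm : m < 2 ^ j) :
    ∫ t in Ico (0 : ℝ) 1, t * haar1 j m t = -(4 ^ (j + 1))⁻¹ := by
  rw [setIntegral_mul_haar1 hm (φ := fun t => t)
      (continuous_id.integrableOn_Icc.mono_set Ico_subset_Icc_self),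
    setIntegral_id_dyadicI, setIntegral_id_dyadicI]
  push_cast
  ring

/-- The tent function `t ↦ dist(t, ℝ \ I_{j,m})`: up to sign, the Haar coefficient of the
anchored-box indicator `1_{(p,1)}` as a function of `p`. -/
noncomputable def haarTent (j m : ℕ) (p : ℝ) : ℝ :=
  max 0 (min (p - m / 2 ^ j) ((m + 1) / 2 ^ j - p))

lemma haarTent_nonneg (j m : ℕ) (p : ℝ) : 0 ≤ haarTent j m p := le_max_left _ _

lemma haarTent_of_notMem (hp : p ∉ dyadicI j m) : haarTent j m p = 0 := by
  refine max_eq_left (not_lt.mp fun h => hp ?_)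
  rw [lt_min_iff, sub_pos, sub_pos] at h
  exact ⟨h.1.le, h.2⟩

lemma haarTent_of_mem (hp : p ∈ dyadicI j m) : haarTent j m p = distToInt (2 ^ j * p) / 2 ^ j := by
  have hfloor := (mem_dyadicI_iff (nonneg_of_mem_dyadicI hp)).mp hp
  have hfract : Int.fract (2 ^ j * p) = 2 ^ j * p - m := by
    have hp0 := nonneg_of_mem_dyadicI hp
    rw [← hfloor, Int.fract, natCast_floor_eq_intCast_floor (by positivity)]
  rw [haarTent, max_eq_right (le_min (sub_nonneg.mpr hp.1) (sub_nonneg.mpr hp.2.le)),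
    distToInt_eq_min, hfract, ← min_div_div_right (by positivity)]
  congr 1 <;> field_simp
  ring

lemma setIntegral_Ioi_indicator {a b : ℝ} (hab : a ≤ b) (p : ℝ) :
    ∫ t in Ico a b, (Ioi p).indicator (1 : ℝ → ℝ) t = max 0 (b - p) - max 0 (a - p) := by
  rw [integral_Ico_eq_integral_Ioc, setIntegral_indicator measurableSet_Ioi, Ioc_inter_Ioi]
  simp only [Pi.one_apply, setIntegral_const, smul_eq_mul, mul_one, Real.volume_real_Ioc]
  simp only [max_def]
  split_ifs <;> linarith

lemma integrableOn_Ioi_indicator (p : ℝ) :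
    IntegrableOn ((Ioi p).indicator (1 : ℝ → ℝ)) (Ico 0 1) :=
  (integrable_const (1 : ℝ)).indicator measurableSet_Ioi

lemma setIntegral_Ioi_indicator_mul_haar1 (hm : m < 2 ^ j) (p : ℝ) :
    ∫ t in Ico (0 : ℝ) 1, (Ioi p).indicator 1 t * haar1 j m t = -haarTent j m p := by
  rw [setIntegral_mul_haar1 hm (integrableOn_Ioi_indicator p), dyadicI, dyadicI,
    setIntegral_Ioi_indicator (dyadicI_le _ _), setIntegral_Ioi_indicator (dyadicI_le _ _),
    haarTent]
  have hl : ((2 * m : ℕ) : ℝ) / 2 ^ (j + 1) = m / 2 ^ j := by push_cast; rw [pow_succ]; field_simp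
  have hc : ((2 * m + 1 : ℕ) : ℝ) / 2 ^ (j + 1) = (m / 2 ^ j + (m + 1) / 2 ^ j) / 2 := by
    push_cast; rw [pow_succ]; field_simp; ring
  have hc' : (((2 * m : ℕ) : ℝ) + 1) / 2 ^ (j + 1) = (m / 2 ^ j + (m + 1) / 2 ^ j) / 2 := by
    rw [← hc]; push_cast; rfl
  have hr : (((2 * m + 1 : ℕ) : ℝ) + 1) / 2 ^ (j + 1) = (m + 1) / 2 ^ j := by
    push_cast; rw [pow_succ]; field_simp; ring
  have hle := dyadicI_le j m
  rw [hl, hc, hc', hr]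
  simp only [max_def, min_def]
  split_ifs <;> linarith

lemma sum_comp_haarTent (hp : p ∈ Ico (0 : ℝ) 1) (j : ℕ) {G : ℝ → ℝ} (hG : G 0 = 0) :
    ∑ m ∈ Finset.range (2 ^ j), G (haarTent j m p) = G (distToInt (2 ^ j * p) / 2 ^ j) := by
  have hfloor : ⌊2 ^ j * p⌋₊ < 2 ^ j := by
    have := mul_lt_mul_of_pos_left hp.2 (by positivity : (0 : ℝ) < 2 ^ j)
    rw [Nat.floor_lt (mul_nonneg (by positivity) hp.1)]
    push_cast
    linarith
  rw [Finset.sum_eq_single_of_mem _ (Finset.mem_range.mpr hfloor),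
    haarTent_of_mem ((mem_dyadicI_iff hp.1).mpr rfl)]
  intro m _ hne
  rw [haarTent_of_notMem fun h => hne ((mem_dyadicI_iff hp.1).mp h).symm, hG]

lemma hasSum_haarTent_sq (hp : p ∈ Ico (0 : ℝ) 1) :
    HasSum (fun j : ℕ => ∑ m ∈ Finset.range (2 ^ j), (2 : ℝ) ^ j * haarTent j m p ^ 2)
      (p * (1 - p)) := by
  have hlevel (j : ℕ) : ∑ m ∈ Finset.range (2 ^ j), (2 : ℝ) ^ j * haarTent j m p ^ 2 =
      (1 / 2) ^ j * distToInt (2 ^ j * p) ^ 2 := by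
    rw [sum_comp_haarTent hp j (G := fun x => 2 ^ j * x ^ 2) (by simp), one_div_pow]
    field_simp
  rw [funext hlevel]
  simpa only [Int.fract_eq_self.mpr hp] using hasSum_distToInt_sq p

lemma hasSum_haarTent_mul (hp : p ∈ Ico (0 : ℝ) 1) :
    HasSum (fun j : ℕ => ∑ m ∈ Finset.range (2 ^ j),
      (2 : ℝ) ^ j * (haarTent j m p * (4 ^ (j + 1))⁻¹)) (p * (1 - p) / 2) := by
  have hlevel (j : ℕ) :
      ∑ m ∈ Finset.range (2 ^ j), (2 : ℝ) ^ j * (haarTent j m p * (4 ^ (j + 1))⁻¹) =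
        1 / 4 * ((1 / 4) ^ j * distToInt (2 ^ j * p)) := by
    rw [sum_comp_haarTent hp j (G := fun x => 2 ^ j * (x * (4 ^ (j + 1))⁻¹)) (by simp),
      one_div_pow, pow_succ]
    field_simp
  rw [funext hlevel, show p * (1 - p) / 2 = 1 / 4 * (2 * (p * (1 - p))) by ring]
  simpa only [Int.fract_eq_self.mpr hp] using (hasSum_distToInt p).mul_left (1 / 4)

lemma hasSum_inv_four_pow_sq :
    HasSum (fun j : ℕ => ∑ _m ∈ Finset.range (2 ^ j), (2 : ℝ) ^ j * ((4 ^ (j + 1))⁻¹) ^ 2)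
      (1 / 12) := by
  have hlevel (j : ℕ) : ∑ _m ∈ Finset.range (2 ^ j), (2 : ℝ) ^ j * ((4 ^ (j + 1))⁻¹) ^ 2 =
      1 / 16 * (1 / 4) ^ j := by
    rw [Finset.sum_const, Finset.card_range, nsmul_eq_mul, Nat.cast_pow, Nat.cast_ofNat,
      ← mul_assoc, ← mul_pow, one_div_pow, pow_succ (4 : ℝ) j,
      show (2 : ℝ) * 2 = 4 by norm_num]
    field_simp
    ring
  rw [funext hlevel, show (1 / 12 : ℝ) = 1 / 16 * (1 - 1 / 4)⁻¹ by norm_num]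
  exact (hasSum_geometric_of_lt_one (by norm_num) (by norm_num)).mul_left _

end OneDimensional

section Bessel

variable {α : Type*} [MeasurableSpace α] {μ : Measure α} {f g : α → ℝ}

lemma inner_toLp_eq_integral (hf : MemLp f 2 μ) (hg : MemLp g 2 μ) :
    inner ℝ hf.toLp hg.toLp = ∫ x, f x * g x ∂μ := by
  rw [L2.inner_def]
  refine integral_congr_ae ?_
  filter_upwards [hf.coeFn_toLp, hg.coeFn_toLp] with x hfx hgx
  rw [hfx, hgx, real_inner_eq_re_inner, RCLike.inner_apply, mul_comm]
  rfl

lemma sum_mul_sq_integral_mul_le {ι : Type*} {s : Finset ι} {h : ι → α → ℝ} {w : ι → ℝ}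
    (hf : MemLp f 2 μ) (hh : ∀ i, MemLp (h i) 2 μ) (hw : ∀ i, 0 < w i)
    (horth : ∀ i ∈ s, ∀ j ∈ s, ∫ x, h i x * h j x ∂μ = if i = j then (w i)⁻¹ else 0) :
    ∑ i ∈ s, w i * (∫ x, f x * h i x ∂μ) ^ 2 ≤ ∫ x, f x ^ 2 ∂μ := by
  set e : s → Lp ℝ 2 μ := fun i => √(w i) • (hh i).toLp with he
  have horthonormal : Orthonormal ℝ e := by
    rw [orthonormal_iff_ite]
    intro i j
    rw [real_inner_smul_left, real_inner_smul_right, inner_toLp_eq_integral,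
      horth i i.2 j j.2]
    rcases eq_or_ne i j with rfl | hij
    · rw [if_pos rfl, if_pos rfl, ← mul_assoc, Real.mul_self_sqrt (hw i).le,
        mul_inv_cancel₀ (hw i).ne']
    · rw [if_neg (Subtype.coe_ne_coe.mpr hij), if_neg hij, mul_zero, mul_zero]
  have hcoef (i : s) : ‖inner ℝ (e i) hf.toLp‖ ^ 2 = w i * (∫ x, f x * h i x ∂μ) ^ 2 := by
    rw [he, real_inner_smul_left, real_inner_comm, inner_toLp_eq_integral, Real.norm_eq_abs,
      sq_abs, mul_pow, Real.sq_sqrt (hw i).le]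
  calc ∑ i ∈ s, w i * (∫ x, f x * h i x ∂μ) ^ 2
      = ∑ i, ‖inner ℝ (e i) hf.toLp‖ ^ 2 := by simp_rw [hcoef, ← Finset.sum_coe_sort s]
    _ ≤ ‖hf.toLp‖ ^ 2 := horthonormal.sum_inner_products_le _
    _ = ∫ x, f x ^ 2 ∂μ := by
      simp_rw [← real_inner_self_eq_norm_sq, inner_toLp_eq_integral, sq]

end Bessel

section UnitBox

variable {d : ℕ}

lemma measurableSet_unitBox (d : ℕ) : MeasurableSet (unitBox d) :=
  MeasurableSet.univ_pi fun _ => measurableSet_Ico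

lemma volume_unitBox (d : ℕ) : volume (unitBox d) = 1 := by
  rw [unitBox, Real.volume_pi_Ico]
  simp

instance : IsFiniteMeasure (volume.restrict (unitBox d)) :=
  isFiniteMeasure_restrict.mpr (by rw [volume_unitBox]; exact ENNReal.one_ne_top)

lemma volume_restrict_unitBox (d : ℕ) :
    volume.restrict (unitBox d) = Measure.pi fun _ => volume.restrict (Ico (0 : ℝ) 1) := by
  rw [unitBox, volume_pi, Measure.restrict_pi_pi]

lemma setIntegral_unitBox_prod (g : Fin d → ℝ → ℝ) :
    ∫ x in unitBox d, ∏ k, g k (x k) = ∏ k, ∫ t in Ico (0 : ℝ) 1, g k t := by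
  rw [volume_restrict_unitBox, integral_fintype_prod_eq_prod]

lemma integrableOn_unitBox_prod {g : Fin d → ℝ → ℝ} (hg : ∀ k, IntegrableOn (g k) (Ico 0 1)) :
    IntegrableOn (fun x => ∏ k, g k (x k)) (unitBox d) := by
  rw [IntegrableOn, volume_restrict_unitBox]
  exact Integrable.fintype_prod hg

lemma prod_mem_Icc_of_mem_unitBox {x : Fin d → ℝ} (hx : x ∈ unitBox d) :
    ∏ k, x k ∈ Icc (0 : ℝ) 1 :=
  ⟨Finset.prod_nonneg fun k _ => (hx k trivial).1,
    Finset.prod_le_one (fun k _ => (hx k trivial).1) fun k _ => (hx k trivial).2.le⟩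

lemma memLp_two_of_abs_le {f : (Fin d → ℝ) → ℝ} {M : ℝ}
    (hf : AEStronglyMeasurable f (volume.restrict (unitBox d)))
    (hM : ∀ x ∈ unitBox d, |f x| ≤ M) : MemLp f 2 (volume.restrict (unitBox d)) :=
  MemLp.of_bound hf M (ae_restrict_of_forall_mem (measurableSet_unitBox d) hM)

end UnitBox

section Haar

variable {d : ℕ} {j m j' m' : Fin d → ℕ} {f : (Fin d → ℝ) → ℝ} {U : Set (Fin d → ℝ)} {M : ℝ}

lemma measurable_haarD (j m : Fin d → ℕ) : Measurable (haarD j m) :=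
  Finset.measurable_prod _ fun k _ => (measurable_haar1 (j k) (m k)).comp (measurable_pi_apply k)

lemma abs_haarD_le_one (j m : Fin d → ℕ) (x : Fin d → ℝ) : |haarD j m x| ≤ 1 := by
  rw [haarD, Finset.abs_prod]
  exact Finset.prod_le_one (fun _ _ => abs_nonneg _) fun _ _ => abs_haar1_le_one _ _ _

lemma memLp_haarD (j m : Fin d → ℕ) : MemLp (haarD j m) 2 (volume.restrict (unitBox d)) :=
  memLp_two_of_abs_le (measurable_haarD j m).aestronglyMeasurable fun x _ => abs_haarD_le_one j m x

lemma haarD_eq_zero_of_notMem {x : Fin d → ℝ} (hx : x ∉ dyadicBox j m) : haarD j m x = 0 := by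
  simp only [dyadicBox, mem_univ_pi, not_forall] at hx
  obtain ⟨k, hk⟩ := hx
  exact Finset.prod_eq_zero (Finset.mem_univ k) (haar1_eq_zero_of_notMem hk)

lemma integrableOn_unitBox_prod_mul_haarD {g : Fin d → ℝ → ℝ}
    (hg : ∀ k, IntegrableOn (g k) (Ico 0 1)) (j m : Fin d → ℕ) :
    IntegrableOn (fun x => (∏ k, g k (x k)) * haarD j m x) (unitBox d) := by
  simp_rw [haarD, ← Finset.prod_mul_distrib]
  exact integrableOn_unitBox_prod (g := fun k t => g k t * haar1 (j k) (m k) t) fun k =>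
    integrableOn_mul_haar1 (hg k) (j k) (m k)

lemma haarCoef_prod (g : Fin d → ℝ → ℝ) (j m : Fin d → ℕ) :
    haarCoef (fun x => ∏ k, g k (x k)) j m =
      ∏ k, ∫ t in Ico (0 : ℝ) 1, g k t * haar1 (j k) (m k) t := by
  simp_rw [haarCoef, haarD, ← Finset.prod_mul_distrib]
  exact setIntegral_unitBox_prod fun k t => g k t * haar1 (j k) (m k) t

/-- The positions `m ∈ D_j` of the dyadic boxes of level `j` inside the unit cube. -/
def haarIndices (j : Fin d → ℕ) : Finset (Fin d → ℕ) :=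
  Fintype.piFinset fun k => Finset.range (2 ^ j k)

lemma lt_of_mem_haarIndices (hm : m ∈ haarIndices j) (k : Fin d) : m k < 2 ^ j k :=
  Finset.mem_range.mp (Fintype.mem_piFinset.mp hm k)

lemma dyadicBox_subset_unitBox (hm : m ∈ haarIndices j) : dyadicBox j m ⊆ unitBox d :=
  pi_mono fun k _ => dyadicI_subset_Ico (lt_of_mem_haarIndices hm k)

lemma setIntegral_haarD_mul_haarD (hm : m ∈ haarIndices j) (hm' : m' ∈ haarIndices j') :
    ∫ x in unitBox d, haarD j m x * haarD j' m' x =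
      if (j, m) = (j', m') then ((2 : ℝ) ^ ∑ k, j k)⁻¹ else 0 := by
  have hprod := haarCoef_prod (fun k => haar1 (j k) (m k)) j' m'
  rw [haarCoef] at hprod
  refine hprod.trans ?_
  split_ifs with h
  · obtain ⟨rfl, rfl⟩ := Prod.mk.inj h
    rw [← Finset.prod_pow_eq_pow_sum, ← Finset.prod_inv_distrib]
    exact Finset.prod_congr rfl fun k _ => setIntegral_haar1_mul_self (lt_of_mem_haarIndices hm k)
  · obtain ⟨k, hk⟩ : ∃ k, (j k, m k) ≠ (j' k, m' k) := by
      by_contra! hall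
      exact h (Prod.ext (funext fun k => congrArg Prod.fst (hall k))
        (funext fun k => congrArg Prod.snd (hall k)))
    exact Finset.prod_eq_zero (Finset.mem_univ k) (setIntegral_haar1_mul_haar1_of_ne
      (lt_of_mem_haarIndices hm k) (lt_of_mem_haarIndices hm' k) hk)

/-- The level-`j` summand `2^|j| ∑_{m ∈ D_j, I_{j,m} ⊆ U} |⟨f, h_{j,m}⟩|²` of the BMO seminorm. -/
noncomputable def haarEnergy (f : (Fin d → ℝ) → ℝ) (U : Set (Fin d → ℝ)) (j : Fin d → ℕ) : ℝ :=
  2 ^ (∑ k, j k) * ∑ m ∈ haarIndices j, if dyadicBox j m ⊆ U then haarCoef f j m ^ 2 else 0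

lemma bmoSq_eq_iSup_haarEnergy (f : (Fin d → ℝ) → ℝ) : bmoSq f =
    ⨆ U : {U : Set (Fin d → ℝ) // MeasurableSet U ∧ U ⊆ unitBox d ∧ 0 < volume U},
      (volume.real U.1)⁻¹ * ∑' j, haarEnergy f U.1 j := rfl

lemma haarEnergy_nonneg (f : (Fin d → ℝ) → ℝ) (U : Set (Fin d → ℝ)) (j : Fin d → ℕ) :
    0 ≤ haarEnergy f U j := by
  refine mul_nonneg (by positivity) (Finset.sum_nonneg fun m _ => ?_)
  split_ifs <;> positivity

lemma haarEnergy_unitBox (f : (Fin d → ℝ) → ℝ) (j : Fin d → ℕ) :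
    haarEnergy f (unitBox d) j = ∑ m ∈ haarIndices j, 2 ^ (∑ k, j k) * haarCoef f j m ^ 2 := by
  rw [haarEnergy, Finset.mul_sum]
  exact Finset.sum_congr rfl fun m hm => by rw [if_pos (dyadicBox_subset_unitBox hm)]

lemma haarCoef_indicator_of_subset (hU : dyadicBox j m ⊆ U) :
    haarCoef (U.indicator f) j m = haarCoef f j m := by
  refine integral_congr_ae (ae_of_all _ fun x => ?_)
  by_cases hx : x ∈ U
  · simp only [indicator_of_mem hx]
  · simp only [haarD_eq_zero_of_notMem fun h => hx (hU h), mul_zero]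

lemma sum_haarEnergy_le_setIntegral_sq (hf : MemLp f 2 (volume.restrict (unitBox d)))
    (hU : MeasurableSet U) (hUB : U ⊆ unitBox d) (T : Finset (Fin d → ℕ)) :
    ∑ j ∈ T, haarEnergy f U j ≤ ∫ x in U, f x ^ 2 := by
  set S := T.sigma fun j => (haarIndices j).filter fun m => dyadicBox j m ⊆ U with hS
  have hmem : ∀ I ∈ S, I.2 ∈ haarIndices I.1 ∧ dyadicBox I.1 I.2 ⊆ U := fun I hI =>
    Finset.mem_filter.mp (Finset.mem_sigma.mp hI).2
  have hbessel := sum_mul_sq_integral_mul_le (s := S) (w := fun I => 2 ^ ∑ k, I.1 k)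
    (hf.indicator hU) (fun I => memLp_haarD I.1 I.2) (fun I => by positivity) fun I hI I' hI' => by
      rw [setIntegral_haarD_mul_haarD (hmem I hI).1 (hmem I' hI').1]
      simp only [Prod.mk.injEq, Sigma.ext_iff, heq_eq_eq]
  calc ∑ j ∈ T, haarEnergy f U j
      = ∑ I ∈ S, 2 ^ (∑ k, I.1 k) * haarCoef f I.1 I.2 ^ 2 := by
        rw [hS, Finset.sum_sigma]
        simp_rw [haarEnergy, Finset.mul_sum, Finset.sum_filter, mul_ite, mul_zero]
    _ = ∑ I ∈ S, 2 ^ (∑ k, I.1 k) * haarCoef (U.indicator f) I.1 I.2 ^ 2 :=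
        Finset.sum_congr rfl fun I hI => by rw [haarCoef_indicator_of_subset (hmem I hI).2]
    _ ≤ ∫ x in unitBox d, U.indicator f x ^ 2 := hbessel
    _ = ∫ x in unitBox d, U.indicator (fun y => f y ^ 2) x := by
        congr with x
        by_cases hx : x ∈ U <;> simp [hx]
    _ = ∫ x in U, f x ^ 2 := by rw [setIntegral_indicator hU, inter_eq_right.mpr hUB]

lemma sum_haarEnergy_le (hf : AEStronglyMeasurable f (volume.restrict (unitBox d)))
    (hM : ∀ x ∈ unitBox d, |f x| ≤ M) (hU : MeasurableSet U) (hUB : U ⊆ unitBox d)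
    (T : Finset (Fin d → ℕ)) : ∑ j ∈ T, haarEnergy f U j ≤ M ^ 2 * volume.real U := by
  have hmem := memLp_two_of_abs_le hf hM
  have hfin : volume U ≠ ⊤ := measure_ne_top_of_subset hUB (by simp [volume_unitBox])
  calc ∑ j ∈ T, haarEnergy f U j ≤ ∫ x in U, f x ^ 2 :=
        sum_haarEnergy_le_setIntegral_sq hmem hU hUB T
    _ ≤ ∫ _ in U, M ^ 2 := setIntegral_mono_on (hmem.integrable_sq.mono_measure
        (Measure.restrict_mono_set _ hUB)) (integrableOn_const hfin) hU
        fun x hx => sq_le_sq.mpr ((hM x (hUB hx)).trans (le_abs_self M))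
    _ = M ^ 2 * volume.real U := by rw [setIntegral_const, smul_eq_mul, mul_comm]

lemma summable_haarEnergy (hf : AEStronglyMeasurable f (volume.restrict (unitBox d)))
    (hM : ∀ x ∈ unitBox d, |f x| ≤ M) (hU : MeasurableSet U) (hUB : U ⊆ unitBox d) :
    Summable (haarEnergy f U) :=
  summable_of_sum_le (haarEnergy_nonneg f U) (sum_haarEnergy_le hf hM hU hUB)

lemma inv_volume_mul_tsum_haarEnergy_le
    (hf : AEStronglyMeasurable f (volume.restrict (unitBox d)))
    (hM : ∀ x ∈ unitBox d, |f x| ≤ M) (hU : MeasurableSet U) (hUB : U ⊆ unitBox d) :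
    (volume.real U)⁻¹ * ∑' j, haarEnergy f U j ≤ M ^ 2 :=
  inv_mul_le_of_le_mul₀ measureReal_nonneg (sq_nonneg M) <| by
    rw [mul_comm]
    exact Real.tsum_le_of_sum_le (haarEnergy_nonneg f U) (sum_haarEnergy_le hf hM hU hUB)

lemma bmoSq_le_sq (hf : AEStronglyMeasurable f (volume.restrict (unitBox d)))
    (hM : ∀ x ∈ unitBox d, |f x| ≤ M) : bmoSq f ≤ M ^ 2 :=
  Real.iSup_le (fun U => inv_volume_mul_tsum_haarEnergy_le hf hM U.2.1 U.2.2.1) (sq_nonneg M)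

lemma sum_haarEnergy_unitBox_le_bmoSq
    (hf : AEStronglyMeasurable f (volume.restrict (unitBox d)))
    (hM : ∀ x ∈ unitBox d, |f x| ≤ M) (T : Finset (Fin d → ℕ)) :
    ∑ j ∈ T, haarEnergy f (unitBox d) j ≤ bmoSq f := by
  have hcube := measurableSet_unitBox d
  have hbdd : BddAbove (range fun U :
      {U : Set (Fin d → ℝ) // MeasurableSet U ∧ U ⊆ unitBox d ∧ 0 < volume U} =>
        (volume.real U.1)⁻¹ * ∑' j, haarEnergy f U.1 j) :=
    ⟨M ^ 2, forall_mem_range.mpr fun U =>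
      inv_volume_mul_tsum_haarEnergy_le hf hM U.2.1 U.2.2.1⟩
  calc ∑ j ∈ T, haarEnergy f (unitBox d) j
      ≤ ∑' j, haarEnergy f (unitBox d) j :=
        (summable_haarEnergy hf hM hcube subset_rfl).sum_le_tsum T
          fun j _ => haarEnergy_nonneg f _ j
    _ = (volume.real (unitBox d))⁻¹ * ∑' j, haarEnergy f (unitBox d) j := by
        rw [measureReal_def, volume_unitBox, ENNReal.toReal_one, inv_one, one_mul]
    _ ≤ bmoSq f := by
        rw [bmoSq_eq_iSup_haarEnergy]
        exact le_ciSup hbdd ⟨unitBox d, hcube, subset_rfl, by simp [volume_unitBox]⟩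

end Haar

section Discrepancy

variable {d N : ℕ} {P : Fin N → Fin d → ℝ} {j m : Fin d → ℕ}

lemma discAnch_eq (hP : ∀ i, P i ∈ unitBox d) (t : Fin d → ℝ) : discAnch P t =
    (∑ i, ∏ k, (Ioi (P i k)).indicator (1 : ℝ → ℝ) (t k)) / N - ∏ k, t k := by
  have hP0 (i : Fin N) (k : Fin d) : 0 ≤ P i k := (hP i k trivial).1
  simp only [discAnch, hP0, true_and, indicator_apply, mem_Ioi, Pi.one_apply,
    Finset.prod_ite_zero, Finset.prod_const_one, Finset.mem_univ, true_imp_iff, Finset.sum_boole]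

lemma measurable_discAnch (hP : ∀ i, P i ∈ unitBox d) : Measurable (discAnch P) := by
  rw [funext (discAnch_eq hP)]
  refine ((Finset.measurable_sum _ fun i _ => Finset.measurable_prod _ fun k _ => ?_).div_const
    _).sub (Finset.measurable_prod _ fun k _ => measurable_pi_apply k)
  exact (measurable_one.indicator measurableSet_Ioi).comp (measurable_pi_apply k)

lemma abs_discAnch_le_one (P : Fin N → Fin d → ℝ) {t : Fin d → ℝ} (ht : t ∈ unitBox d) :
    |discAnch P t| ≤ 1 := by
  have hvol := prod_mem_Icc_of_mem_unitBox ht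
  have hcount :
      ((Finset.univ.filter fun i => ∀ k, 0 ≤ P i k ∧ P i k < t k).card : ℝ) / N ∈ Icc 0 1 :=
    ⟨by positivity, div_le_one_of_le₀
      (by exact_mod_cast (Finset.card_le_univ _).trans_eq (Fintype.card_fin N)) N.cast_nonneg⟩
  exact abs_sub_le_iff.mpr ⟨by linarith [hvol.1, hcount.2], by linarith [hvol.2, hcount.1]⟩

lemma haarCoef_prod_Ioi_indicator (hm : m ∈ haarIndices j) (p : Fin d → ℝ) :
    haarCoef (fun x => ∏ k, (Ioi (p k)).indicator (1 : ℝ → ℝ) (x k)) j m =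
      (-1) ^ d * ∏ k, haarTent (j k) (m k) (p k) := by
  rw [haarCoef_prod fun k => (Ioi (p k)).indicator 1, Finset.prod_congr rfl fun k _ =>
    setIntegral_Ioi_indicator_mul_haar1 (lt_of_mem_haarIndices hm k) (p k), Finset.prod_neg,
    Finset.card_univ, Fintype.card_fin]

lemma haarCoef_prod_id (hm : m ∈ haarIndices j) :
    haarCoef (fun x => ∏ k, x k) j m = (-1) ^ d * ∏ k, (4 ^ (j k + 1))⁻¹ := by
  rw [haarCoef_prod fun _ t => t, Finset.prod_congr rfl fun k _ =>
    setIntegral_id_mul_haar1 (lt_of_mem_haarIndices hm k), Finset.prod_neg,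
    Finset.card_univ, Fintype.card_fin]

lemma haarCoef_discAnch (hP : ∀ i, P i ∈ unitBox d) (hm : m ∈ haarIndices j) :
    haarCoef (discAnch P) j m = (-1) ^ d *
      ((∑ i, ∏ k, haarTent (j k) (m k) (P i k)) / N - ∏ k, (4 ^ (j k + 1))⁻¹) := by
  have hind (i : Fin N) := integrableOn_unitBox_prod_mul_haarD
    (fun k => integrableOn_Ioi_indicator (P i k)) j m
  have hid := integrableOn_unitBox_prod_mul_haarD (g := fun _ t => t)
    (fun _ => continuous_id.integrableOn_Icc.mono_set Ico_subset_Icc_self) j m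
  calc haarCoef (discAnch P) j m
      = ∫ x in unitBox d, ((∑ i, (∏ k, (Ioi (P i k)).indicator (1 : ℝ → ℝ) (x k)) * haarD j m x) / N
          - (∏ k, x k) * haarD j m x) := by
        simp_rw [haarCoef, discAnch_eq hP, sub_mul, div_mul_eq_mul_div, Finset.sum_mul]
    _ = (∑ i, haarCoef (fun x => ∏ k, (Ioi (P i k)).indicator (1 : ℝ → ℝ) (x k)) j m) / N
          - haarCoef (fun x => ∏ k, x k) j m := by
        rw [integral_sub ((integrable_finsetSum _ fun i _ => hind i).div_const _) hid,
          integral_div, integral_finsetSum _ fun i _ => hind i]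
        rfl
    _ = _ := by
        simp_rw [haarCoef_prod_Ioi_indicator hm, haarCoef_prod_id hm, ← Finset.mul_sum]
        ring

lemma sq_sub_add_le_sq_sum_div_sub {ι : Type*} {s : Finset ι} {b : ι → ℝ}
    (hb : ∀ i ∈ s, 0 ≤ b i) (c n : ℝ) :
    c ^ 2 - 2 / n * ∑ i ∈ s, b i * c + 1 / n ^ 2 * ∑ i ∈ s, b i ^ 2 ≤
      ((∑ i ∈ s, b i) / n - c) ^ 2 :=
  calc c ^ 2 - 2 / n * ∑ i ∈ s, b i * c + 1 / n ^ 2 * ∑ i ∈ s, b i ^ 2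
      ≤ c ^ 2 - 2 / n * ((∑ i ∈ s, b i) * c) + 1 / n ^ 2 * (∑ i ∈ s, b i) ^ 2 := by
        rw [Finset.sum_mul]
        gcongr
        exact Finset.sum_sq_le_sq_sum_of_nonneg hb
    _ = ((∑ i ∈ s, b i) / n - c) ^ 2 := by ring

lemma le_haarEnergy_discAnch (hP : ∀ i, P i ∈ unitBox d) (j : Fin d → ℕ) :
    ∑ m ∈ haarIndices j, ∏ k, (2 : ℝ) ^ j k * ((4 ^ (j k + 1))⁻¹) ^ 2
      - 2 / N * ∑ i, ∑ m ∈ haarIndices j,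
          ∏ k, 2 ^ j k * (haarTent (j k) (m k) (P i k) * (4 ^ (j k + 1))⁻¹)
      + 1 / N ^ 2 * ∑ i, ∑ m ∈ haarIndices j, ∏ k, 2 ^ j k * haarTent (j k) (m k) (P i k) ^ 2
    ≤ haarEnergy (discAnch P) (unitBox d) j := by
  rw [haarEnergy_unitBox, Finset.sum_comm (s := Finset.univ), Finset.sum_comm (s := Finset.univ),
    Finset.mul_sum, Finset.mul_sum, ← Finset.sum_sub_distrib, ← Finset.sum_add_distrib]
  refine Finset.sum_le_sum fun m hm => ?_
  have hbox := mul_le_mul_of_nonneg_left (sq_sub_add_le_sq_sum_div_sub (s := Finset.univ)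
    (b := fun i => ∏ k, haarTent (j k) (m k) (P i k))
    (fun i _ => Finset.prod_nonneg fun k _ => haarTent_nonneg _ _ _)
    (∏ k, (4 ^ (j k + 1))⁻¹) N) (by positivity : (0 : ℝ) ≤ 2 ^ ∑ k, j k)
  rw [haarCoef_discAnch hP hm, mul_pow, pow_right_comm, neg_one_sq, one_pow, one_mul]
  refine le_of_eq_of_le ?_ hbox
  simp_rw [Finset.prod_mul_distrib, Finset.prod_pow, Finset.prod_pow_eq_pow_sum, ← Finset.mul_sum]
  ring

lemma tendsto_sum_piFinset_prod {F : Fin d → ℕ → ℕ → ℝ} {a : Fin d → ℝ}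
    (hF : ∀ k, HasSum (fun l => ∑ n ∈ Finset.range (2 ^ l), F k l n) (a k)) :
    Tendsto (fun J => ∑ j ∈ Fintype.piFinset fun _ => Finset.range J,
      ∑ m ∈ haarIndices j, ∏ k, F k (j k) (m k)) atTop (𝓝 (∏ k, a k)) := by
  have hfactor (J : ℕ) : ∑ j ∈ Fintype.piFinset fun _ => Finset.range J,
      ∑ m ∈ haarIndices j, ∏ k, F k (j k) (m k) =
        ∏ k, ∑ l ∈ Finset.range J, ∑ n ∈ Finset.range (2 ^ l), F k l n := by
    simp_rw [haarIndices, Finset.prod_univ_sum]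
  simp_rw [hfactor]
  exact tendsto_finsetProd _ fun k _ => (hF k).tendsto_sum_nat

lemma le_bmoSq_discAnch (hP : ∀ i, P i ∈ unitBox d) :
    (1 / 12 : ℝ) ^ d - 2 / N * ∑ i, ∏ k, (P i k * (1 - P i k) / 2)
      + 1 / N ^ 2 * ∑ i, ∏ k, (P i k * (1 - P i k)) ≤ bmoSq (discAnch P) := by
  have hconst := tendsto_sum_piFinset_prod fun _ : Fin d => hasSum_inv_four_pow_sq
  rw [Finset.prod_const, Finset.card_univ, Fintype.card_fin] at hconst
  have hcross (i : Fin N) :=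
    tendsto_sum_piFinset_prod fun k => hasSum_haarTent_mul (hP i k trivial)
  have hdiag (i : Fin N) :=
    tendsto_sum_piFinset_prod fun k => hasSum_haarTent_sq (hP i k trivial)
  refine le_of_tendsto' ((hconst.sub ((tendsto_finsetSum _ fun i _ => hcross i).const_mul _)).add
    ((tendsto_finsetSum _ fun i _ => hdiag i).const_mul _)) fun J => ?_
  rw [Finset.sum_comm (s := Finset.univ), Finset.sum_comm (s := Finset.univ),
    Finset.mul_sum, Finset.mul_sum, ← Finset.sum_sub_distrib, ← Finset.sum_add_distrib]
  exact (Finset.sum_le_sum fun j _ => le_haarEnergy_discAnch hP j).trans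
    (sum_haarEnergy_unitBox_le_bmoSq (measurable_discAnch hP).aestronglyMeasurable
      (fun _ => abs_discAnch_le_one P) _)

lemma prod_mul_one_sub_mem_Icc {p : Fin d → ℝ} (hp : p ∈ unitBox d) :
    ∏ k, p k * (1 - p k) ∈ Icc (0 : ℝ) ((1 / 4) ^ d) := by
  have hnonneg (k : Fin d) : 0 ≤ p k * (1 - p k) :=
    mul_nonneg (hp k trivial).1 (sub_nonneg.mpr (hp k trivial).2.le)
  have hquarter (k : Fin d) : p k * (1 - p k) ≤ 1 / 4 := by linarith [sq_nonneg (p k - 1 / 2)]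
  refine ⟨Finset.prod_nonneg fun k _ => hnonneg k, ?_⟩
  calc ∏ k, p k * (1 - p k) ≤ ∏ _k : Fin d, (1 / 4 : ℝ) :=
        Finset.prod_le_prod (fun k _ => hnonneg k) fun k _ => hquarter k
    _ = (1 / 4) ^ d := by rw [Finset.prod_const, Finset.card_univ, Fintype.card_fin]

lemma two_div_mul_prod_sub_le {p : Fin d → ℝ} (hp : p ∈ unitBox d) (n : ℝ) :
    2 / n * ∏ k, (p k * (1 - p k) / 2) - 1 / n ^ 2 * ∏ k, (p k * (1 - p k)) ≤ (1 / 16) ^ d := by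
  have hv := prod_mul_one_sub_mem_Icc hp
  set v := ∏ k, p k * (1 - p k)
  set y : ℝ := (1 / 2) ^ d with hy
  calc 2 / n * ∏ k, (p k * (1 - p k) / 2) - 1 / n ^ 2 * v = 2 / n * (v * y) - 1 / n ^ 2 * v := by
        rw [Finset.prod_div_distrib, Finset.prod_const, Finset.card_univ, Fintype.card_fin, hy,
          one_div_pow, mul_one_div]
    _ ≤ v * y ^ 2 := by
        have hsquare : v * y ^ 2 - (2 / n * (v * y) - 1 / n ^ 2 * v) = v * (y - 1 / n) ^ 2 := by
          ring
        exact sub_nonneg.mp (hsquare ▸ mul_nonneg hv.1 (sq_nonneg _))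
    _ ≤ (1 / 4) ^ d * y ^ 2 := by gcongr; exact hv.2
    _ = (1 / 16) ^ d := by rw [hy, pow_right_comm, ← mul_pow]; norm_num

lemma one_sub_mul_le_bmoSq_discAnch (hP : ∀ i, P i ∈ unitBox d) :
    (1 / 12 : ℝ) ^ d * (1 - N * (3 / 4) ^ d) ≤ bmoSq (discAnch P) :=
  calc (1 / 12 : ℝ) ^ d * (1 - N * (3 / 4) ^ d)
      = (1 / 12) ^ d - N * (1 / 16) ^ d := by
        rw [mul_one_sub, mul_left_comm, ← mul_pow]
        norm_num
    _ ≤ (1 / 12) ^ d - ∑ i, (2 / N * ∏ k, (P i k * (1 - P i k) / 2)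
          - 1 / N ^ 2 * ∏ k, (P i k * (1 - P i k))) := by
        have hpoints := Finset.sum_le_card_nsmul Finset.univ _ _ fun i _ =>
          two_div_mul_prod_sub_le (hP i) N
        rw [Finset.card_univ, Fintype.card_fin, nsmul_eq_mul] at hpoints
        exact sub_le_sub_left hpoints _
    _ = (1 / 12) ^ d - 2 / N * ∑ i, ∏ k, (P i k * (1 - P i k) / 2)
          + 1 / N ^ 2 * ∑ i, ∏ k, (P i k * (1 - P i k)) := by
        rw [Finset.sum_sub_distrib, ← Finset.mul_sum, ← Finset.mul_sum, sub_sub_eq_add_sub,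
          sub_add_eq_add_sub]
    _ ≤ bmoSq (discAnch P) := le_bmoSq_discAnch hP

lemma sqrt_le_discBMO (d N : ℕ) :
    √((1 / 12) ^ d * (1 - N * (3 / 4) ^ d)) ≤ discBMO d N := by
  have : Nonempty {P : Fin N → Fin d → ℝ // ∀ i, P i ∈ unitBox d} :=
    ⟨fun _ _ => 0, fun _ _ _ => ⟨le_rfl, one_pos⟩⟩
  exact le_ciInf fun P => Real.sqrt_le_sqrt (one_sub_mul_le_bmoSq_discAnch P.2)

lemma discBMO_le {M : ℝ} (hM : 0 ≤ M) (hP : ∀ i, P i ∈ unitBox d)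
    (hdisc : ∀ t ∈ unitBox d, |discAnch P t| ≤ M) : discBMO d N ≤ M := by
  have hbdd : BddBelow (range fun Q : {Q : Fin N → Fin d → ℝ // ∀ i, Q i ∈ unitBox d} =>
      √(bmoSq (discAnch Q.1))) := ⟨0, forall_mem_range.mpr fun _ => Real.sqrt_nonneg _⟩
  exact (ciInf_le hbdd ⟨P, hP⟩).trans <| Real.sqrt_le_iff.mpr
    ⟨hM, bmoSq_le_sq (measurable_discAnch hP).aestronglyMeasurable hdisc⟩

end Discrepancy

section Grid

lemma abs_prod_sub_prod_le_sum {ι : Type*} {s : Finset ι} {a b : ι → ℝ}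
    (ha : ∀ i ∈ s, |a i| ≤ 1) (hb : ∀ i ∈ s, |b i| ≤ 1) :
    |∏ i ∈ s, a i - ∏ i ∈ s, b i| ≤ ∑ i ∈ s, |a i - b i| := by
  induction s using Finset.cons_induction with
  | empty => simp
  | cons i s hi ih =>
    rw [Finset.forall_mem_cons] at ha hb
    rw [Finset.prod_cons, Finset.prod_cons, Finset.sum_cons]
    have hprod : |∏ i ∈ s, b i| ≤ 1 := by
      rw [Finset.abs_prod]
      exact Finset.prod_le_one (fun _ _ => abs_nonneg _) hb.2
    calc |a i * ∏ i ∈ s, a i - b i * ∏ i ∈ s, b i|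
        = |(a i - b i) * ∏ i ∈ s, b i + a i * (∏ i ∈ s, a i - ∏ i ∈ s, b i)| := by
          congr 1; ring
      _ ≤ |a i - b i| * |∏ i ∈ s, b i| + |a i| * |∏ i ∈ s, a i - ∏ i ∈ s, b i| := by
          rw [← abs_mul, ← abs_mul]
          exact abs_add_le _ _
      _ ≤ |a i - b i| + ∑ i ∈ s, |a i - b i| :=
          add_le_add (mul_le_of_le_one_right (abs_nonneg _) hprod)
            ((mul_le_of_le_one_left (abs_nonneg _) ha.1).trans (ih ha.2 hb.2))

variable {d n : ℕ}

/-- The regular grid `{0, 1/n, …, (n-1)/n}^d` as a family of `n ^ d` points. -/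
noncomputable def regularGrid (d n : ℕ) (i : Fin (n ^ d)) (k : Fin d) : ℝ :=
  (finFunctionFinEquiv.symm i k : ℕ) / n

lemma regularGrid_mem_unitBox (i : Fin (n ^ d)) : regularGrid d n i ∈ unitBox d := fun k _ => by
  have hlt := (finFunctionFinEquiv.symm i k).is_lt
  exact ⟨div_nonneg (Nat.cast_nonneg _) n.cast_nonneg,
    (div_lt_one (by exact_mod_cast hlt.pos)).mpr (by exact_mod_cast hlt)⟩

lemma sum_Ioi_indicator_div {t : ℝ} (ht : t ≤ 1) :
    ∑ a : Fin n, (Ioi ((a : ℕ) / n : ℝ)).indicator (1 : ℝ → ℝ) t = ⌈n * t⌉₊ := by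
  have hfilter : (Finset.range n).filter (fun a : ℕ => (a : ℝ) / n < t) =
      Finset.range ⌈n * t⌉₊ := by
    rcases n.eq_zero_or_pos with rfl | hn
    · simp
    have hn' : (0 : ℝ) < n := by exact_mod_cast hn
    ext a
    rw [Finset.mem_filter, Finset.mem_range, Finset.mem_range, Nat.lt_ceil, div_lt_iff₀' hn',
      and_iff_right_iff_imp]
    exact fun h => by exact_mod_cast h.trans_le (mul_le_of_le_one_right hn'.le ht)
  simp only [indicator_apply, mem_Ioi, Pi.one_apply]
  rw [Fin.sum_univ_eq_sum_range fun a : ℕ => if (a : ℝ) / n < t then (1 : ℝ) else 0,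
    Finset.sum_boole, hfilter, Finset.card_range]

lemma discAnch_regularGrid {t : Fin d → ℝ} (ht : t ∈ unitBox d) :
    discAnch (regularGrid d n) t = ∏ k, (⌈n * t k⌉₊ / n : ℝ) - ∏ k, t k := by
  rw [discAnch_eq regularGrid_mem_unitBox, ← Equiv.sum_comp finFunctionFinEquiv]
  simp only [regularGrid, Equiv.symm_apply_apply]
  rw [Finset.prod_div_distrib, Finset.prod_const, Finset.card_univ, Fintype.card_fin,
    Finset.prod_congr rfl fun k _ => (sum_Ioi_indicator_div (ht k trivial).2.le).symm,
    Finset.prod_univ_sum, Fintype.piFinset_univ, Nat.cast_pow]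

lemma abs_discAnch_regularGrid_le (hn : 0 < n) {t : Fin d → ℝ} (ht : t ∈ unitBox d) :
    |discAnch (regularGrid d n) t| ≤ d / n := by
  have hn' : (0 : ℝ) < n := by exact_mod_cast hn
  have ht0 k : 0 ≤ t k := (ht k trivial).1
  have ht1 k : t k ≤ 1 := (ht k trivial).2.le
  have hceil k : |(⌈n * t k⌉₊ / n : ℝ)| ≤ 1 := by
    rw [abs_of_nonneg (by positivity), div_le_one hn', Nat.cast_le, Nat.ceil_le]
    exact mul_le_of_le_one_right hn'.le (ht1 k)
  have hround k : |(⌈n * t k⌉₊ / n : ℝ) - t k| ≤ 1 / n := by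
    rw [div_sub' hn'.ne', abs_div, abs_of_pos hn', div_le_div_iff_of_pos_right hn',
      abs_of_nonneg (sub_nonneg.mpr (Nat.le_ceil _)), sub_le_iff_le_add']
    exact (Nat.ceil_lt_add_one (mul_nonneg hn'.le (ht0 k))).le
  calc |discAnch (regularGrid d n) t| = |∏ k, (⌈n * t k⌉₊ / n : ℝ) - ∏ k, t k| := by
        rw [discAnch_regularGrid ht]
    _ ≤ ∑ k, |(⌈n * t k⌉₊ / n : ℝ) - t k| := abs_prod_sub_prod_le_sum (fun k _ => hceil k)
        fun k _ => (abs_of_nonneg (ht0 k)).trans_le (ht1 k)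
    _ ≤ ∑ _k : Fin d, (1 / n : ℝ) := Finset.sum_le_sum fun k _ => hround k
    _ = d / n := by
        rw [Finset.sum_const, Finset.card_univ, Fintype.card_fin, nsmul_eq_mul, mul_one_div]

lemma exists_discBMO_le (d : ℕ) {δ : ℝ} (hδ : 0 < δ) : ∃ N, discBMO d N ≤ δ := by
  obtain ⟨n, hn⟩ := exists_nat_gt (d / δ)
  have hn0 : (0 : ℝ) < n := lt_of_le_of_lt (by positivity) hn
  refine ⟨n ^ d, discBMO_le hδ.le regularGrid_mem_unitBox fun t ht =>
    (abs_discAnch_regularGrid_le (by exact_mod_cast hn0) ht).trans ?_⟩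
  exact (div_le_comm₀ hδ hn0).mp hn.le

end Grid

theorem bmo_discrepancy_curse (d : ℕ) (hd : 1 ≤ d) (ε : ℝ)
    (hε0 : 0 < ε) (hε1 : ε < 1) :
    ((4 : ℝ) / 3) ^ d * (1 - ε ^ 2) ≤ (NinvBMO d ε : ℝ) := by
  have hattained : discBMO d (NinvBMO d ε) ≤ ε * √((1 / 12) ^ d) :=
    Nat.sInf_mem (exists_discBMO_le d (by positivity))
  set N := NinvBMO d ε
  have hsq : (1 / 12) ^ d * (1 - N * (3 / 4) ^ d) ≤ (1 / 12 : ℝ) ^ d * ε ^ 2 := by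
    have h := (Real.sqrt_le_iff.mp ((sqrt_le_discBMO d N).trans hattained)).2
    rwa [mul_pow, Real.sq_sqrt (by positivity), mul_comm (ε ^ 2)] at h
  have hgap : 1 - ε ^ 2 ≤ N * (3 / 4) ^ d := by
    linarith [le_of_mul_le_mul_left hsq (by positivity)]
  calc ((4 : ℝ) / 3) ^ d * (1 - ε ^ 2) ≤ (4 / 3) ^ d * (N * (3 / 4) ^ d) := by gcongr
    _ = N := by rw [mul_left_comm, ← mul_pow]; norm_num
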